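/- Let X be a coded shift with unique representation G, let k ∈ ℕ₀ and let φ : X → ℝ be constant on centered (2k+1)-cylinders. Let E be the set of x ∈ X_seq such that, in the unique parsing of x into generators, a generator begins at index 0; for x ∈ E let r_E(x) be the length of that generator and φ_E(x) = Σ_{j=0}^{r_E(x)−1} φ(f^j x). Let h : E → Y = G^ℤ be the bijection sending x to its sequence of parsed generators (aligned so that the generator beginning at index 0 of x has index 0 in h(x)), and set φ̃ = φ_E ∘ h^{−1}. Then for every generator e ∈ G, sup(φ̃|_{[e]}) − inf(φ̃|_{[e]}) ≤ 2k (sup φ − inf φ), where [e] = {y ∈ Y : y_0 = e}; in particular φ̃ has finite oscillation. -/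

import Mathlib

open Filter MeasureTheory Topology
open scoped BigOperators ENNReal

noncomputable section

namespace PaperStmt

/-- The full two-sided shift: bi-infinite sequences over the alphabet `Fin d`. -/
abbrev FullShift (d : ℕ) := ℤ → Fin d

/-- The (left) shift map `f(x)_k = x_{k+1}`. -/
def shift (d : ℕ) : FullShift d → FullShift d := fun x k => x (k + 1)

/-- A (two-sided) shift space: a nonempty closed shift-invariant subset. -/
def IsShiftSpace {d : ℕ} (X : Set (FullShift d)) : Prop :=
  X.Nonempty ∧ IsClosed X ∧ shift d '' X = X

/-- The cylinder at position `0` determined by a word `w` of length `n`. -/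
def cyl {d n : ℕ} (w : Fin n → Fin d) : Set (FullShift d) :=
  {x | ∀ i : Fin n, x ((i : ℕ) : ℤ) = w i}

/-- The language of `X` in length `n`: words of length `n` occurring in elements of `X`
(at position `0`; for shift-invariant `X` this is occurrence anywhere). -/
def langSet {d : ℕ} (X : Set (FullShift d)) (n : ℕ) : Set (Fin n → Fin d) :=
  {w | (X ∩ cyl w).Nonempty}

/-- Birkhoff sum `S_n φ`. -/
def birkhoff {d : ℕ} (φ : FullShift d → ℝ) (n : ℕ) (x : FullShift d) : ℝ :=
  ∑ k ∈ Finset.range n, φ ((shift d)^[k] x)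

open Classical in
/-- The `n`-th partition function `Z_n(φ)` of `X`. -/
def Zfun {d : ℕ} (X : Set (FullShift d)) (φ : FullShift d → ℝ) (n : ℕ) : ℝ :=
  ∑ w : Fin n → Fin d,
    if (X ∩ cyl w).Nonempty then Real.exp (sSup (birkhoff φ n '' (X ∩ cyl w))) else 0

/-- Topological pressure `P_top(X,φ) = lim (1/n) log Z_n(φ) = inf_n (1/n) log Z_n(φ)`. -/
def pressure {d : ℕ} (X : Set (FullShift d)) (φ : FullShift d → ℝ) : ℝ :=
  ⨅ n : ℕ, (1 / (n + 1 : ℝ)) * Real.log (Zfun X φ (n + 1))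

/-- Topological entropy `h_top(X) = inf_n (1/n) log |L(X,n)|`. -/
def entTop {d : ℕ} (X : Set (FullShift d)) : ℝ :=
  ⨅ n : ℕ, (1 / (n + 1 : ℝ)) * Real.log ((langSet X (n + 1)).ncard : ℝ)

/-- The shift-invariant Borel probability measures giving `X` full measure. -/
def InvProb {d : ℕ} (X : Set (FullShift d)) : Set (Measure (FullShift d)) :=
  {μ | IsProbabilityMeasure μ ∧ μ.map (shift d) = μ ∧ μ X = 1}

/-- Measure-theoretic (Kolmogorov–Sinai) entropy of an invariant measure,
computed via cylinder sets: `h_μ = lim -(1/n) Σ_{|w|=n} μ[w] log μ[w]`. -/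
def mEnt {d : ℕ} (μ : Measure (FullShift d)) : ℝ :=
  Filter.liminf
    (fun n : ℕ => (1 / (n + 1 : ℝ)) *
      ∑ w : Fin (n + 1) → Fin d, Real.negMulLog (μ (cyl w)).toReal)
    Filter.atTop

/-- The free energy `h_μ(f) + ∫ φ dμ` of an invariant measure. -/
def freeEnergy {d : ℕ} (μ : Measure (FullShift d)) (φ : FullShift d → ℝ) : ℝ :=
  mEnt μ + ∫ x, φ x ∂μ

/-- `sup { ∫ φ dμ : μ ∈ M_X }`. -/
def intAvg {d : ℕ} (X : Set (FullShift d)) (φ : FullShift d → ℝ) : ℝ :=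
  sSup {r | ∃ μ ∈ InvProb X, r = ∫ x, φ x ∂μ}

/-- `μ` is an equilibrium state of `φ` on `X`. -/
def IsEqState {d : ℕ} (X : Set (FullShift d)) (φ : FullShift d → ℝ)
    (μ : Measure (FullShift d)) : Prop :=
  μ ∈ InvProb X ∧ freeEnergy μ φ = pressure X φ

/-- `p : ℤ → ℤ` parses `x` into consecutive generator blocks from `𝒢`:
the block of `x` from `p j` to `p (j+1) - 1` is a generator, for every `j`. -/
def IsParsing {d : ℕ} (𝒢 : Set (List (Fin d))) (x : FullShift d) (p : ℤ → ℤ) : Prop :=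
  StrictMono p ∧ ∀ j : ℤ, ∃ g ∈ 𝒢,
    p (j + 1) = p j + g.length ∧ ∀ (l : ℕ) (hl : l < g.length), x (p j + l) = g[l]

/-- `X_seq`: the set of bi-infinite concatenations of generators. -/
def Xseq {d : ℕ} (𝒢 : Set (List (Fin d))) : Set (FullShift d) :=
  {x | ∃ p : ℤ → ℤ, IsParsing 𝒢 x p}

/-- The coded shift generated by `𝒢`: the closure of `X_seq`. -/
def codedShift {d : ℕ} (𝒢 : Set (List (Fin d))) : Set (FullShift d) :=
  closure (Xseq 𝒢)

/-- `𝒢` is a unique representation: every `x ∈ X_seq` admits exactly one parsing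
into generator blocks (i.e. the set of cut points is uniquely determined). -/
def UniqueRep {d : ℕ} (𝒢 : Set (List (Fin d))) : Prop :=
  ∀ (x : FullShift d) (p q : ℤ → ℤ),
    IsParsing 𝒢 x p → IsParsing 𝒢 x q → Set.range p = Set.range q

/-- `P_seq(φ) = sup { h_μ + ∫φ dμ : μ ∈ M_X, μ(Xs) = 1 }`. -/
def PseqOf {d : ℕ} (X Xs : Set (FullShift d)) (φ : FullShift d → ℝ) : ℝ :=
  sSup {r | ∃ μ ∈ InvProb X, μ Xs = 1 ∧ r = freeEnergy μ φ}

/-- `P_lim(φ) = sup { h_μ + ∫φ dμ : μ ∈ M_X, μ(X \ Xs) = 1 }`. -/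
def PlimOf {d : ℕ} (X Xs : Set (FullShift d)) (φ : FullShift d → ℝ) : ℝ :=
  sSup {r | ∃ μ ∈ InvProb X, μ (X \ Xs) = 1 ∧ r = freeEnergy μ φ}

/-- `φ` has strict full sequential pressure: `P_seq(φ) > P_lim(φ)`. -/
def StrictFSP {d : ℕ} (X Xs : Set (FullShift d)) (φ : FullShift d → ℝ) : Prop :=
  PlimOf X Xs φ < PseqOf X Xs φ

/-- `φ ∈ FSSP(X)`: `φ` lies in the sup-norm closure (within `C(X,ℝ)`) of the
set of continuous potentials with strict full sequential pressure. -/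
def InFSSP {d : ℕ} (X Xs : Set (FullShift d)) (φ : FullShift d → ℝ) : Prop :=
  ∀ ε : ℝ, 0 < ε → ∃ ψ : FullShift d → ℝ, ContinuousOn ψ X ∧
    (∀ x ∈ X, |φ x - ψ x| ≤ ε) ∧ StrictFSP X Xs ψ

/-- The invariant probability measure equidistributed on the (period-`ℓ`) orbit of `y`. -/
def periodicMeasure {d : ℕ} (y : FullShift d) (ℓ : ℕ) : Measure (FullShift d) :=
  (ℓ : ℝ≥0∞)⁻¹ • ∑ k ∈ Finset.range ℓ, Measure.dirac ((shift d)^[k] y)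

/-- `y` is periodic with period `ℓ ≥ 1`. -/
def IsPeriodicOf {d : ℕ} (y : FullShift d) (ℓ : ℕ) : Prop :=
  1 ≤ ℓ ∧ (shift d)^[ℓ] y = y


theorem shift_iterate_apply {d : ℕ} (m : ℕ) (x : FullShift d) (i : ℤ) :
    (shift d)^[m] x i = x (i + m) := by
  induction m generalizing x with
  | zero => simp
  | succ m ih =>
    rw [Function.iterate_succ_apply, ih, shift]
    push_cast
    ring_nf

theorem IsParsing.shift_iterate {d : ℕ} {𝒢 : Set (List (Fin d))} {x : FullShift d}
    {p : ℤ → ℤ} (hx : IsParsing 𝒢 x p) (m : ℕ) :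
    IsParsing 𝒢 ((shift d)^[m] x) (fun j => p j - m) := by
  refine ⟨fun a b hab => sub_lt_sub_right (hx.1 hab) _, fun j => ?_⟩
  obtain ⟨g, hg, hlen, hval⟩ := hx.2 j
  refine ⟨g, hg, ?_, fun l hl => ?_⟩
  · simp only [hlen]
    ring
  · rw [shift_iterate_apply, ← hval l hl]
    ring_nf

theorem IsParsing.shift_iterate_mem_codedShift {d : ℕ} {𝒢 : Set (List (Fin d))}
    {x : FullShift d} {p : ℤ → ℤ} (hx : IsParsing 𝒢 x p) (m : ℕ) :
    (shift d)^[m] x ∈ codedShift 𝒢 :=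
  subset_closure ⟨_, hx.shift_iterate m⟩

/-- A function on `X` that is constant on centered `(2k+1)`-cylinders takes finitely many
values. -/
theorem finite_image_of_locallyConstant {d : ℕ} {X : Set (FullShift d)} {k : ℕ}
    {φ : FullShift d → ℝ}
    (hφ : ∀ x ∈ X, ∀ y ∈ X, (∀ i : ℤ, |i| ≤ (k : ℤ) → x i = y i) → φ x = φ y) :
    (φ '' X).Finite := by
  rcases X.eq_empty_or_nonempty with rfl | ⟨x₀, hx₀⟩
  · simp
  let r : FullShift d → (Set.Icc (-(k : ℤ)) k → Fin d) := fun x i => x i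
  have : Nonempty (FullShift d) := ⟨x₀⟩
  refine ((Set.toFinite (r '' X)).image fun w => φ (Function.invFunOn r X w)).subset ?_
  rintro _ ⟨x, hx, rfl⟩
  have hmem : r x ∈ r '' X := ⟨x, hx, rfl⟩
  refine ⟨r x, hmem, hφ _ (Function.invFunOn_mem hmem) _ hx fun i hi => ?_⟩
  exact congrFun (Function.invFunOn_eq hmem) ⟨i, abs_le.mp hi⟩

theorem abs_sub_le_sSup_sub_sInf {s : Set ℝ} (hs : s.Finite) {a b : ℝ} (ha : a ∈ s)
    (hb : b ∈ s) : |a - b| ≤ sSup s - sInf s := by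
  have ha₁ := le_csSup hs.bddAbove ha
  have hb₁ := le_csSup hs.bddAbove hb
  have ha₂ := csInf_le hs.bddBelow ha
  have hb₂ := csInf_le hs.bddBelow hb
  rw [abs_le]
  constructor <;> linarith

/-- A sum over `range n` whose terms are at most `C`, and nonpositive at distance at least `k`
from both ends, is at most `2 * k * C`. -/
theorem sum_range_le_of_boundary {n k : ℕ} {f : ℕ → ℝ} {C : ℝ} (hC : 0 ≤ C)
    (hf : ∀ i < n, f i ≤ C) (hf₀ : ∀ i, k ≤ i → i + k < n → f i ≤ 0) :
    ∑ i ∈ Finset.range n, f i ≤ 2 * k * C := by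
  set B := (Finset.range n).filter fun i => ¬ (k ≤ i ∧ i + k < n) with hB
  have hcard : B.card ≤ 2 * k := by
    have hsub : B ⊆ Finset.range k ∪ Finset.Ico (n - k) n := by
      intro i hi
      simp only [hB, Finset.mem_filter, Finset.mem_union, Finset.mem_range,
        Finset.mem_Ico] at hi ⊢
      omega
    have h₁ := Finset.card_le_card hsub
    have h₂ := Finset.card_union_le (Finset.range k) (Finset.Ico (n - k) n)
    rw [Finset.card_range, Nat.card_Ico] at h₂
    omega
  calc ∑ i ∈ Finset.range n, f i
      ≤ ∑ i ∈ Finset.range n, if ¬ (k ≤ i ∧ i + k < n) then C else 0 := by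
        refine Finset.sum_le_sum fun i hi => ?_
        split_ifs with h
        · exact hf₀ i h.1 h.2
        · exact hf i (Finset.mem_range.mp hi)
    _ = B.card * C := by rw [← Finset.sum_filter, Finset.sum_const, nsmul_eq_mul]
    _ ≤ 2 * k * C := by
        gcongr
        exact_mod_cast hcard

/-- oscillation bound for the induced potential. Let `𝒢` be a unique
representation of a coded shift and let `φ` be constant on centered `(2k+1)`-cylinders
of `X`. If `x, x'` are points of `X_seq` whose parsings have a cut at `0` followed by
the same generator `g`, then the induced Birkhoff sums over the block `g` (that is,
the values `φ̃` on the cylinder `[g]` of `Y = 𝒢^ℤ`) differ by at most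
`2k (sup φ − inf φ)`; in particular `φ̃` has finite oscillation. -/
theorem statement18 {d : ℕ} (hd : 2 ≤ d) (𝒢 : Set (List (Fin d)))
    (h𝒢 : ∀ g ∈ 𝒢, g ≠ []) (hU : UniqueRep 𝒢) (k : ℕ) (φ : FullShift d → ℝ)
    (hLC : ∀ x ∈ codedShift 𝒢, ∀ y ∈ codedShift 𝒢,
      (∀ i : ℤ, |i| ≤ (k : ℤ) → x i = y i) → φ x = φ y)
    (g : List (Fin d)) (hg : g ∈ 𝒢)
    (x x' : FullShift d) (p p' : ℤ → ℤ)
    (hx : IsParsing 𝒢 x p) (hx' : IsParsing 𝒢 x' p')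
    (hx0 : ∃ j : ℤ, p j = 0 ∧ p (j + 1) = g.length ∧
      ∀ (l : ℕ) (hl : l < g.length), x (l : ℕ) = g[l])
    (hx'0 : ∃ j : ℤ, p' j = 0 ∧ p' (j + 1) = g.length ∧
      ∀ (l : ℕ) (hl : l < g.length), x' (l : ℕ) = g[l]) :
    |birkhoff φ g.length x - birkhoff φ g.length x'|
      ≤ 2 * k * (sSup (φ '' codedShift 𝒢) - sInf (φ '' codedShift 𝒢)) := by
  have hfin := finite_image_of_locallyConstant hLC
  obtain ⟨-, -, -, hxg⟩ := hx0
  obtain ⟨-, -, -, hxg'⟩ := hx'0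
  have hbound (i : ℕ) : |φ ((shift d)^[i] x) - φ ((shift d)^[i] x')|
      ≤ sSup (φ '' codedShift 𝒢) - sInf (φ '' codedShift 𝒢) :=
    abs_sub_le_sSup_sub_sInf hfin
      (Set.mem_image_of_mem φ (hx.shift_iterate_mem_codedShift i))
      (Set.mem_image_of_mem φ (hx'.shift_iterate_mem_codedShift i))
  unfold birkhoff
  rw [← Finset.sum_sub_distrib]
  refine (Finset.abs_sum_le_sum_abs _ _).trans
    (sum_range_le_of_boundary ((abs_nonneg _).trans (hbound 0)) (fun i _ => hbound i) ?_)
  intro i hki hin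
  have heq : φ ((shift d)^[i] x) = φ ((shift d)^[i] x') := by
    refine hLC _ (hx.shift_iterate_mem_codedShift i) _ (hx'.shift_iterate_mem_codedShift i)
      fun m hm => ?_
    rw [shift_iterate_apply, shift_iterate_apply]
    rw [abs_le] at hm
    obtain ⟨l, hl⟩ := Int.eq_ofNat_of_zero_le (show 0 ≤ m + i by omega)
    rw [hl, hxg l (by omega), hxg' l (by omega)]
  simp [heq]

end PaperStmt
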